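/- Let 1/3 < λ < 1, ξ ∈ ℝ, b, σ ∈ C_b²(ℝ;ℝ) with inf σ > 0, and for g ∈ C^λ₀([0,1];ℝ) let x_·(ξ,g) be the Doss–Sussmann solution. Set W = σb' − σ'b and J_t(g) = (σ(x_t(ξ,g))/σ(ξ))·exp(∫₀^t (W/σ)(x_u(ξ,g)) du). Then for every g, h ∈ C^λ₀([0,1];ℝ) and t ∈ [0,1], the directional derivative ∇_h x_t(ξ,g) := lim_{ε→0} (x_t(ξ,g+εh) − x_t(ξ,g))/ε exists and equals σ(x_t(ξ,g))·h_t + ∫₀^t J_t(g)·J_s(g)⁻¹·W(x_s(ξ,g))·h_s ds. -/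

import Mathlib

/-- `f` is in `C_b^n(ℝ;ℝ)`. -/
def CbN (n : ℕ) (f : ℝ → ℝ) : Prop :=
  ContDiff ℝ n f ∧ ∀ i ≤ n, ∃ M : ℝ, ∀ x : ℝ, |iteratedDeriv i f x| ≤ M

/-- `f_{σ,b}(x,y) = exp(−∫₀^y σ'(φ(x,η))dη) · b(φ(x,y))`. -/
noncomputable def fsb (b σ : ℝ → ℝ) (φ : ℝ → ℝ → ℝ) (x y : ℝ) : ℝ :=
  Real.exp (-(∫ η in (0:ℝ)..y, deriv σ (φ x η))) * b (φ x y)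

/-- The Wronskian-type function `W = σb' − σ'b`. -/
noncomputable def Wf (b σ : ℝ → ℝ) (x : ℝ) : ℝ := σ x * deriv b x - deriv σ x * b x

/-- `J_t = (σ(x_t)/σ(ξ)) · exp(∫₀ᵗ (W/σ)(x_u) du)` for a path `x`. -/
noncomputable def Jpath (b σ : ℝ → ℝ) (ξ : ℝ) (x : ℝ → ℝ) (t : ℝ) : ℝ :=
  (σ (x t) / σ ξ) * Real.exp (∫ u in (0:ℝ)..t, Wf b σ (x u) / σ (x u))

open Set MeasureTheory intervalIntegral

/-- A function of class `C_b²` and its first two derivatives admit a common bound. -/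
lemma CbN.exists_bound {f : ℝ → ℝ} (hf : CbN 2 f) :
    ∃ M : ℝ, 0 < M ∧ ∀ x, HasDerivAt f (deriv f x) x ∧
      HasDerivAt (deriv f) (deriv (deriv f) x) x ∧
      |f x| ≤ M ∧ |deriv f x| ≤ M ∧ |deriv (deriv f) x| ≤ M := by
  obtain ⟨hc, hbd⟩ := hf
  obtain ⟨M0, h0⟩ := hbd 0 (by norm_num)
  obtain ⟨M1, h1⟩ := hbd 1 (by norm_num)
  obtain ⟨M2, h2⟩ := hbd 2 le_rfl
  have hd : Differentiable ℝ f := hc.differentiable (by norm_num)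
  have hd' : Differentiable ℝ (deriv f) := by
    have hc' : ContDiff ℝ ((1 : WithTop ℕ∞) + 1) f := by
      simpa [one_add_one_eq_two] using hc
    exact (contDiff_succ_iff_deriv.1 hc').2.2.differentiable (by norm_num)
  refine ⟨max (max M0 M1) (max M2 1), by simp, fun x => ⟨(hd x).hasDerivAt, (hd' x).hasDerivAt,
    ?_, ?_, ?_⟩⟩
  · have := h0 x
    simp only [iteratedDeriv_zero] at this
    simp [this]
  · have := h1 x
    simp only [iteratedDeriv_one] at this
    simp [this]
  · have := h2 x
    simp only [iteratedDeriv_succ, iteratedDeriv_zero] at this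
    simp [this]

/-- A solution of an autonomous integral equation with bounded continuous coefficient is
differentiable; no measurability of the solution has to be assumed. -/
lemma hasDerivAt_of_integral_eq {σ f : ℝ → ℝ} {α M : ℝ} (hσ : Continuous σ)
    (hM : ∀ x, |σ x| ≤ M) (hf : ∀ β, f β = α + ∫ η in (0:ℝ)..β, σ (f η)) (β : ℝ) :
    HasDerivAt f (σ (f β)) β := by
  have hmeas : Measurable f := by
    classical
    set S : Set ℝ := {β | IntervalIntegrable (fun η => σ (f η)) volume 0 β} with hS
    have hconn : S.OrdConnected := by
      refine ⟨fun x hx y hy z hz => ?_⟩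
      have hxy : IntervalIntegrable (fun η => σ (f η)) volume x y := hx.symm.trans hy
      exact hx.trans (hxy.mono_set (uIcc_subset_uIcc left_mem_uIcc (Icc_subset_uIcc hz)))
    have hcont : ContinuousOn f S := by
      have : LipschitzOnWith (Real.toNNReal M) f S := by
        refine LipschitzOnWith.of_dist_le_mul fun x hx y hy => ?_
        rw [Real.coe_toNNReal _ ((abs_nonneg _).trans (hM 0)), Real.dist_eq, Real.dist_eq, hf x,
          hf y, add_sub_add_left_eq_sub, integral_interval_sub_left hx hy]
        exact intervalIntegral.norm_integral_le_of_norm_le_const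
          (f := fun η => σ (f η)) fun η _ => hM _
      exact this.continuousOn
    have hpw : f = S.piecewise f (fun _ => α) := by
      funext x
      by_cases hx : x ∈ S
      · simp [hx]
      · rw [piecewise_eq_of_notMem _ _ _ hx, hf x, integral_undef hx, add_zero]
    rw [hpw]
    exact hcont.measurable_piecewise continuousOn_const hconn.measurableSet
  have hint : ∀ x y, IntervalIntegrable (fun η => σ (f η)) volume x y := fun x y =>
    (intervalIntegrable_const (c := M)).mono_fun
      (hσ.measurable.comp hmeas).aestronglyMeasurable
      (Filter.Eventually.of_forall fun η => (hM _).trans (le_abs_self M))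
  have hcont : Continuous f := by
    rw [show f = fun β => α + ∫ η in (0:ℝ)..β, σ (f η) from funext hf]
    exact continuous_const.add (continuous_primitive hint 0)
  have := (integral_hasDerivAt_right (hint 0 β)
    (hσ.comp hcont).stronglyMeasurable.stronglyMeasurableAtFilter
    (hσ.comp hcont).continuousAt).const_add α
  rwa [show (fun β => α + ∫ η in (0:ℝ)..β, σ (f η)) = f from (funext hf).symm] at this

lemma ContinuousOn.intervalIntegrable_zero {k : ℝ → ℝ} (hk : ContinuousOn k (Icc 0 1)) {t : ℝ}
    (ht : t ∈ Icc (0:ℝ) 1) : IntervalIntegrable k volume 0 t :=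
  (hk.mono (by rw [uIcc_of_le ht.1]; exact Icc_subset_Icc_right ht.2)).intervalIntegrable

lemma ContinuousOn.hasDerivWithinAt_primitive {k : ℝ → ℝ} (hk : ContinuousOn k (Icc 0 1))
    {t : ℝ} (ht : t ∈ Icc (0:ℝ) 1) :
    HasDerivWithinAt (fun t => ∫ u in (0:ℝ)..t, k u) (k t) (Icc 0 1) t := by
  have : Fact (t ∈ Icc (0:ℝ) 1) := ⟨ht⟩
  exact integral_hasDerivWithinAt_right (hk.intervalIntegrable_zero ht)
    (hk.stronglyMeasurableAtFilter_nhdsWithin measurableSet_Icc t) (hk t ht)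

/-- Grönwall's inequality on `[0,1]` for functions vanishing at the origin. -/
lemma abs_le_of_abs_deriv_le {f f' : ℝ → ℝ} {K e : ℝ} (hK : 0 < K) (he : 0 ≤ e)
    (hf : ∀ t ∈ Icc (0:ℝ) 1, HasDerivWithinAt f (f' t) (Icc 0 1) t) (h0 : f 0 = 0)
    (hbd : ∀ t ∈ Icc (0:ℝ) 1, |f' t| ≤ K * |f t| + e) {t : ℝ} (ht : t ∈ Icc (0:ℝ) 1) :
    |f t| ≤ e * (Real.exp K / K) := by
  have key := norm_le_gronwallBound_of_norm_deriv_right_le (f := f) (f' := f') (δ := 0) (K := K)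
    (ε := e) (a := 0) (b := 1) (fun s hs => (hf s hs).continuousWithinAt)
    (fun s hs => (hf s (Ico_subset_Icc_self hs)).mono_of_mem_nhdsWithin
      (Icc_mem_nhdsGE_of_mem hs)) (by simp [h0])
    (fun s hs => hbd s (Ico_subset_Icc_self hs)) t ht
  rw [gronwallBound_of_K_ne_0 hK.ne', Real.norm_eq_abs] at key
  refine key.trans ?_
  have : Real.exp (K * (t - 0)) ≤ Real.exp K := by
    apply Real.exp_le_exp.2
    nlinarith [ht.2]
  calc 0 * Real.exp (K * (t - 0)) + e / K * (Real.exp (K * (t - 0)) - 1)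
      ≤ e / K * Real.exp K := by
        rw [zero_mul, zero_add]
        exact mul_le_mul_of_nonneg_left (by linarith) (by positivity)
    _ = e * (Real.exp K / K) := by ring

lemma abs_sub_sub_deriv_mul_le {G G' : ℝ → ℝ} {L : ℝ} (hG : ∀ y, HasDerivAt G (G' y) y)
    (hL : ∀ p q, |G' p - G' q| ≤ L * |p - q|) (p q : ℝ) :
    |G p - G q - G' q * (p - q)| ≤ L * |p - q| ^ 2 := by
  have hL0 : 0 ≤ L := by simpa using (abs_nonneg _).trans (hL 1 0)
  have := Convex.norm_image_sub_le_of_norm_hasDerivWithin_le (𝕜 := ℝ)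
    (f := fun y => G y - G' q * y) (f' := fun y => G' y - G' q) (s := uIcc q p) (x := q) (y := p)
    (C := L * |p - q|)
    (fun y _ => by
      simpa using! ((hG y).sub ((hasDerivAt_id y).const_mul (G' q))).hasDerivWithinAt)
    (fun y hy => (hL y q).trans (mul_le_mul_of_nonneg_left (abs_sub_left_of_mem_uIcc hy) hL0))
    (convex_uIcc q p) left_mem_uIcc right_mem_uIcc
  calc |G p - G q - G' q * (p - q)| = ‖G p - G' q * p - (G q - G' q * q)‖ := by
        rw [Real.norm_eq_abs]; congr 1; ring
    _ ≤ L * |p - q| * ‖p - q‖ := this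
    _ = L * |p - q| ^ 2 := by rw [Real.norm_eq_abs]; ring

lemma hasDerivAt_zero_of_abs_sub_le_sq {f : ℝ → ℝ} {w C : ℝ}
    (hf : ∀ ε, |f ε - f 0 - ε * w| ≤ C * ε ^ 2) : HasDerivAt f w 0 := by
  rw [hasDerivAt_iff_isLittleO]
  have h1 : (fun ε : ℝ => f ε - f 0 - (ε - 0) • w) =O[nhds 0] fun ε => ε ^ 2 := by
    refine Asymptotics.IsBigO.of_bound C (Filter.Eventually.of_forall fun ε => ?_)
    simpa using hf ε
  refine h1.trans_isLittleO ?_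
  simpa using Asymptotics.isLittleO_pow_id (𝕜 := ℝ) (n := 2) (by norm_num)

/-- Differentiability in the driver of the additive-noise equation `dz = G(z + g + εh) dt`. -/
lemma hasDerivAt_additive_solution {G G' g h : ℝ → ℝ} {z : ℝ → ℝ → ℝ} {K L z₀ : ℝ}
    (hG : ∀ y, HasDerivAt G (G' y) y) (hK : ∀ y, |G' y| ≤ K)
    (hL : ∀ p q, |G' p - G' q| ≤ L * |p - q|)
    (hg : ContinuousOn g (Icc 0 1)) (hh : ContinuousOn h (Icc 0 1)) (hz₀ : ∀ ε, z ε 0 = z₀)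
    (hz : ∀ ε, ∀ t ∈ Icc (0:ℝ) 1,
      HasDerivWithinAt (z ε) (G (z ε t + (g t + ε * h t))) (Icc 0 1) t)
    {t : ℝ} (ht : t ∈ Icc (0:ℝ) 1) :
    HasDerivAt (fun ε => z ε t)
      (Real.exp (∫ u in (0:ℝ)..t, G' (z 0 u + g u)) *
        ∫ s in (0:ℝ)..t, Real.exp (-∫ u in (0:ℝ)..s, G' (z 0 u + g u)) *
          (G' (z 0 s + g s) * h s)) 0 := by
  have hL0 : 0 ≤ L := by simpa using (abs_nonneg _).trans (hL 1 0)
  have hK1 : 0 < K + 1 := by linarith [(abs_nonneg _).trans (hK 0)]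
  have hK' : ∀ y, |G' y| ≤ K + 1 := fun y => (hK y).trans (by linarith)
  have hG'c : Continuous G' :=
    (LipschitzWith.of_dist_le_mul (K := ⟨L, hL0⟩) fun p q => hL p q).continuous
  obtain ⟨H, hH⟩ := isCompact_Icc.exists_bound_of_continuousOn hh
  have hH0 : 0 ≤ H := (norm_nonneg _).trans (hH 0 (by simp))
  have hz0 : ∀ t ∈ Icc (0:ℝ) 1, HasDerivWithinAt (z 0) (G (z 0 t + g t)) (Icc 0 1) t := by
    intro t ht
    simpa using hz 0 t ht
  have hlipG : ∀ p q, |G p - G q| ≤ (K + 1) * |p - q| := fun p q =>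
    Convex.norm_image_sub_le_of_norm_hasDerivWithin_le (𝕜 := ℝ) (f := G) (f' := G') (s := univ)
      (fun y _ => (hG y).hasDerivWithinAt) (fun y _ => hK' y) convex_univ (mem_univ _) (mem_univ _)
  set q : ℝ → ℝ := fun u => G' (z 0 u + g u) with hq
  have hqc : ContinuousOn q (Icc 0 1) := hG'c.comp_continuousOn
    (ContinuousOn.add (fun s hs => (hz0 s hs).continuousWithinAt) hg)
  set I : ℝ → ℝ := fun t => ∫ u in (0:ℝ)..t, q u with hI
  have hId : ∀ t ∈ Icc (0:ℝ) 1, HasDerivWithinAt I (q t) (Icc 0 1) t := fun t ht =>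
    hqc.hasDerivWithinAt_primitive ht
  have hIc : ContinuousOn I (Icc 0 1) := fun s hs => (hId s hs).continuousWithinAt
  have hkc : ContinuousOn (fun s => Real.exp (-I s) * (q s * h s)) (Icc 0 1) :=
    (Real.continuous_exp.comp_continuousOn hIc.neg).mul (hqc.mul hh)
  set w : ℝ → ℝ := fun t => Real.exp (I t) * ∫ s in (0:ℝ)..t, Real.exp (-I s) * (q s * h s)
    with hw
  have hwd : ∀ t ∈ Icc (0:ℝ) 1, HasDerivWithinAt w (q t * (w t + h t)) (Icc 0 1) t := by
    intro t ht
    refine (((hId t ht).exp).mul (hkc.hasDerivWithinAt_primitive ht)).congr_deriv ?_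
    have he : Real.exp (I t) * Real.exp (-I t) = 1 := by rw [← Real.exp_add]; simp
    simp only [hw]
    linear_combination (q t * h t) * he
  have hw0 : w 0 = 0 := by simp [hw]
  have hfirst : ∀ ε, ∀ t ∈ Icc (0:ℝ) 1,
      |z ε t - z 0 t| ≤ ((K + 1) * (|ε| * H)) * (Real.exp (K + 1) / (K + 1)) := by
    intro ε t ht
    refine abs_le_of_abs_deriv_le (f := fun t => z ε t - z 0 t) hK1 (by positivity)
      (fun s hs => (hz ε s hs).sub (hz0 s hs)) (by simp [hz₀]) (fun s hs => ?_) ht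
    refine (hlipG _ _).trans ?_
    rw [← mul_add]
    refine mul_le_mul_of_nonneg_left ?_ hK1.le
    calc |z ε s + (g s + ε * h s) - (z 0 s + g s)| = |(z ε s - z 0 s) + ε * h s| := by
          congr 1; ring
      _ ≤ |z ε s - z 0 s| + |ε * h s| := abs_add_le _ _
      _ ≤ |z ε s - z 0 s| + |ε| * H := by
          rw [abs_mul]
          exact add_le_add le_rfl (mul_le_mul_of_nonneg_left (hH s hs) (abs_nonneg _))
  set D : ℝ := (K + 1) * H * (Real.exp (K + 1) / (K + 1)) + H with hD
  have hincr : ∀ ε, ∀ s ∈ Icc (0:ℝ) 1,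
      |z ε s + (g s + ε * h s) - (z 0 s + g s)| ≤ D * |ε| := by
    intro ε s hs
    calc |z ε s + (g s + ε * h s) - (z 0 s + g s)| = |(z ε s - z 0 s) + ε * h s| := by
          congr 1; ring
      _ ≤ |z ε s - z 0 s| + |ε * h s| := abs_add_le _ _
      _ ≤ ((K + 1) * (|ε| * H)) * (Real.exp (K + 1) / (K + 1)) + |ε| * H := by
          rw [abs_mul]
          exact add_le_add (hfirst ε s hs) (mul_le_mul_of_nonneg_left (hH s hs) (abs_nonneg _))
      _ = D * |ε| := by rw [hD]; ring
  refine hasDerivAt_zero_of_abs_sub_le_sq (C := L * D ^ 2 * (Real.exp (K + 1) / (K + 1)))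
    fun ε => ?_
  have := abs_le_of_abs_deriv_le (f := fun t => z ε t - z 0 t - ε * w t) (K := K + 1)
    (e := L * (D * |ε|) ^ 2) hK1 (by positivity)
    (fun s hs => ((hz ε s hs).sub (hz0 s hs)).sub ((hwd s hs).const_mul ε))
    (by simp [hz₀, hw0]) (fun s hs => ?_) ht
  · refine this.trans (le_of_eq ?_)
    rw [mul_pow, sq_abs]
    ring
  · have htaylor := (abs_sub_sub_deriv_mul_le hG hL (z ε s + (g s + ε * h s)) (z 0 s + g s)).trans
      (mul_le_mul_of_nonneg_left (pow_le_pow_left₀ (abs_nonneg _) (hincr ε s hs) 2) hL0)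
    have hlin : |q s * (z ε s - z 0 s - ε * w s)| ≤ (K + 1) * |z ε s - z 0 s - ε * w s| := by
      rw [abs_mul]
      exact mul_le_mul_of_nonneg_right (hK' _) (abs_nonneg _)
    calc |G (z ε s + (g s + ε * h s)) - G (z 0 s + g s) - ε * (q s * (w s + h s))|
        = |q s * (z ε s - z 0 s - ε * w s) + (G (z ε s + (g s + ε * h s)) - G (z 0 s + g s) -
            G' (z 0 s + g s) * (z ε s + (g s + ε * h s) - (z 0 s + g s)))| := by
          congr 1; simp only [hq]; ring
      _ ≤ _ := (abs_add_le _ _).trans (add_le_add hlin htaylor)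

/-- A Hölder function is continuous. -/
lemma continuousOn_of_abs_sub_le_rpow {s : Set ℝ} {g : ℝ → ℝ} {lam C : ℝ} (hlam : 0 < lam)
    (hg : ∀ x ∈ s, ∀ t ∈ s, |g t - g x| ≤ C * |t - x| ^ lam) : ContinuousOn g s := by
  intro x hx
  rw [ContinuousWithinAt, tendsto_iff_dist_tendsto_zero]
  have hlim : Filter.Tendsto (fun t => C * |t - x| ^ lam) (nhdsWithin x s) (nhds 0) := by
    have hc : Continuous fun t : ℝ => C * |t - x| ^ lam :=
      continuous_const.mul ((by fun_prop : Continuous fun t : ℝ => |t - x|).rpow_const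
        fun _ => Or.inr hlam.le)
    have := (hc.tendsto x).mono_left (nhdsWithin_le_nhds (s := s))
    simpa [Real.zero_rpow hlam.ne'] using this
  exact squeeze_zero' (Filter.Eventually.of_forall fun _ => dist_nonneg)
    (Filter.eventually_of_mem self_mem_nhdsWithin fun t ht => hg x hx t ht) hlim

/-- The derivative of `W/σ` along the flow of `σ`. -/
lemma hasDerivAt_Wf_div {b σ : ℝ → ℝ} {p : ℝ → ℝ} {y : ℝ}
    (hb : HasDerivAt b (deriv b (p y)) (p y))
    (hb' : HasDerivAt (deriv b) (deriv (deriv b) (p y)) (p y))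
    (hσ : HasDerivAt σ (deriv σ (p y)) (p y))
    (hσ' : HasDerivAt (deriv σ) (deriv (deriv σ) (p y)) (p y)) (hne : σ (p y) ≠ 0)
    (hp : HasDerivAt p (σ (p y)) y) :
    HasDerivAt (fun y => Wf b σ (p y) / σ (p y))
      (σ (p y) * deriv (deriv b) (p y) - deriv (deriv σ) (p y) * b (p y)
        - Wf b σ (p y) * deriv σ (p y) / σ (p y)) y := by
  have hW : HasDerivAt (Wf b σ)
      (deriv σ (p y) * deriv b (p y) + σ (p y) * deriv (deriv b) (p y)
        - (deriv (deriv σ) (p y) * b (p y) + deriv σ (p y) * deriv b (p y))) (p y) :=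
    (hσ.mul hb').sub (hσ'.mul hb)
  refine ((hW.comp y hp).div (hσ.comp y hp) hne).congr_deriv ?_
  simp only [Function.comp_apply]
  field_simp
  ring

theorem stmt11
    (lam : ℝ) (hlam1 : 1/3 < lam) (hlam2 : lam < 1)
    (ξ : ℝ) (b σ : ℝ → ℝ) (hb : CbN 2 b) (hσ : CbN 2 σ)
    (hσpos : ∃ c : ℝ, 0 < c ∧ ∀ x : ℝ, c ≤ σ x)
    (φ : ℝ → ℝ → ℝ) (hφ : ∀ α β : ℝ, φ α β = α + ∫ η in (0:ℝ)..β, σ (φ α η))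
    -- `A g` is the Doss–Sussmann auxiliary path for the driver `g`, so that
    -- `x_t(ξ,g) = φ(A g t, g t)`
    (A : (ℝ → ℝ) → ℝ → ℝ)
    (hA : ∀ g : ℝ → ℝ, ContinuousOn g (Set.Icc 0 1) → g 0 = 0 →
      ContinuousOn (A g) (Set.Icc 0 1) ∧
      ∀ t ∈ Set.Icc (0:ℝ) 1, A g t = ξ + ∫ u in (0:ℝ)..t, fsb b σ φ (A g u) (g u)) :
    ∀ g h : ℝ → ℝ,
      (∃ Cg : ℝ, ∀ s ∈ Set.Icc (0:ℝ) 1, ∀ t ∈ Set.Icc (0:ℝ) 1,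
        |g t - g s| ≤ Cg * |t - s| ^ lam) → g 0 = 0 →
      (∃ Ch : ℝ, ∀ s ∈ Set.Icc (0:ℝ) 1, ∀ t ∈ Set.Icc (0:ℝ) 1,
        |h t - h s| ≤ Ch * |t - s| ^ lam) → h 0 = 0 →
      ∀ t ∈ Set.Icc (0:ℝ) 1,
        HasDerivAt (fun ε : ℝ => φ (A (fun u => g u + ε * h u) t) (g t + ε * h t))
          (σ (φ (A g t) (g t)) * h t
            + ∫ s in (0:ℝ)..t,
                Jpath b σ ξ (fun u => φ (A g u) (g u)) t
                  * (Jpath b σ ξ (fun u => φ (A g u) (g u)) s)⁻¹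
                  * Wf b σ (φ (A g s) (g s)) * h s) 0 := by
  obtain ⟨Mb, hMb0, hbM⟩ := hb.exists_bound
  obtain ⟨M, hM0, hσM⟩ := hσ.exists_bound
  obtain ⟨c, hc0, hc⟩ := hσpos
  have hpos : ∀ x, 0 < σ x := fun x => hc0.trans_le (hc x)
  have hne : ∀ x, σ x ≠ 0 := fun x => (hpos x).ne'
  have hσd : ∀ x, HasDerivAt σ (deriv σ x) x := fun x => (hσM x).1
  have hbd : ∀ x, HasDerivAt b (deriv b x) x := fun x => (hbM x).1
  have hσc : Continuous σ := hσ.1.continuous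
  have hbc : Continuous b := hb.1.continuous
  have hσc' : Continuous (deriv σ) :=
    continuous_iff_continuousAt.2 fun x => (hσM x).2.1.continuousAt
  have hφd : ∀ α β, HasDerivAt (φ α) (σ (φ α β)) β := fun α β =>
    hasDerivAt_of_integral_eq hσc (fun x => (hσM x).2.2.1) (hφ α) β
  have hφ0 : ∀ α, φ α 0 = α := fun α => by rw [hφ α 0]; simp
  -- `H` straightens the flow: `H (φ α β) = H α + β`.
  set H : ℝ → ℝ := fun x => ∫ u in (0:ℝ)..x, (σ u)⁻¹ with hHdef
  have hinvc : Continuous fun u => (σ u)⁻¹ := hσc.inv₀ hne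
  have hHd : ∀ x, HasDerivAt H (σ x)⁻¹ x := fun x =>
    integral_hasDerivAt_right (hinvc.intervalIntegrable _ _)
      hinvc.stronglyMeasurable.stronglyMeasurableAtFilter hinvc.continuousAt
  have hHinj : Function.Injective H :=
    (strictMono_of_deriv_pos fun x => by rw [(hHd x).deriv]; exact inv_pos.2 (hpos x)).injective
  have hHφ : ∀ α β, H (φ α β) = H α + β := by
    intro α β
    have hd : ∀ β, HasDerivAt (fun β => H (φ α β) - β) 0 β := fun β => by
      simpa [hne] using! ((hHd (φ α β)).comp β (hφd α β)).sub (hasDerivAt_id β)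
    have := is_const_of_deriv_eq_zero (fun β => (hd β).differentiableAt)
      (fun β => (hd β).deriv) β 0
    simp only [hφ0] at this
    linarith
  set p : ℝ → ℝ := φ 0 with hp
  have hpd : ∀ y, HasDerivAt p (σ (p y)) y := hφd 0
  have hpc : Continuous p := continuous_iff_continuousAt.2 fun y => (hpd y).continuousAt
  have hHc : Continuous H := continuous_iff_continuousAt.2 fun y => (hHd y).continuousAt
  have hφp : ∀ α β, φ α β = p (H α + β) := by
    intro α β
    apply hHinj
    rw [hHφ, hp, hHφ]
    simp [hHdef]
  have hfsb : ∀ x y, fsb b σ φ x y = σ x * (b (p (H x + y)) / σ (p (H x + y))) := by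
    intro x y
    have hφc : Continuous (φ x) := continuous_iff_continuousAt.2 fun y => (hφd x y).continuousAt
    have hlog : ∫ η in (0:ℝ)..y, deriv σ (φ x η) = Real.log (σ (φ x y)) - Real.log (σ (φ x 0)) := by
      refine integral_eq_sub_of_hasDerivAt (f := fun η => Real.log (σ (φ x η))) (fun η _ => ?_)
        ((hσc'.comp hφc).intervalIntegrable _ _)
      refine (((hσd (φ x η)).comp η (hφd x η)).log (hne _)).congr_deriv ?_
      simp [hne]
    rw [fsb, hlog, hφ0, neg_sub, Real.exp_sub, Real.exp_log (hpos _), Real.exp_log (hpos _), hφp]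
    ring
  set G : ℝ → ℝ := fun y => b (p y) / σ (p y) with hGdef
  set G' : ℝ → ℝ := fun y => Wf b σ (p y) / σ (p y) with hG'def
  have hWM : ∀ x, |Wf b σ x| ≤ M * Mb + M * Mb := fun x => by
    refine (abs_sub _ _).trans ?_
    rw [abs_mul, abs_mul]
    obtain ⟨-, -, h1, h2, -⟩ := hσM x
    obtain ⟨-, -, h3, h4, -⟩ := hbM x
    gcongr
  have hGd : ∀ y, HasDerivAt G (G' y) y := fun y => by
    refine (((hbd (p y)).comp y (hpd y)).div ((hσd (p y)).comp y (hpd y)) (hne _)).congr_deriv ?_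
    have := hne (p y)
    simp only [hG'def, Wf, Function.comp_apply]
    field_simp
  have hG'M : ∀ y, |G' y| ≤ (M * Mb + M * Mb) / c := fun y => by
    simp only [hG'def]
    rw [abs_div, abs_of_pos (hpos _)]
    exact div_le_div₀ (by positivity) (hWM _) hc0 (hc _)
  have hG'L : ∀ x y, |G' x - G' y| ≤
      (M * Mb + M * Mb + (M * Mb + M * Mb) * M / c) * |x - y| := fun x y => by
    refine Convex.norm_image_sub_le_of_norm_hasDerivWithin_le (𝕜 := ℝ) (f := G') (s := univ)
      (fun y _ => (hasDerivAt_Wf_div (hbd _) (hbM _).2.1 (hσd _) (hσM _).2.1 (hne _)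
        (hpd y)).hasDerivWithinAt) (fun y _ => ?_) convex_univ (mem_univ _) (mem_univ _)
    obtain ⟨-, -, h1, h2, h3⟩ := hσM (p y)
    obtain ⟨-, -, h4, h5, h6⟩ := hbM (p y)
    rw [Real.norm_eq_abs]
    refine (abs_sub _ _).trans (add_le_add ((abs_sub _ _).trans ?_) ?_)
    · rw [abs_mul, abs_mul]
      gcongr
    · rw [abs_div, abs_mul, abs_of_pos (hpos _)]
      exact div_le_div₀ (by positivity)
        (mul_le_mul (hWM _) h2 (abs_nonneg _) (by positivity)) hc0 (hc _)
  intro g h ⟨Cg, hCg⟩ hg0 ⟨Ch, hCh⟩ hh0 t ht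
  have hlam : 0 < lam := by linarith
  have hgc := continuousOn_of_abs_sub_le_rpow hlam hCg
  have hhc := continuousOn_of_abs_sub_le_rpow hlam hCh
  have hgε : ∀ ε : ℝ, ContinuousOn (fun u => g u + ε * h u) (Icc 0 1) := fun ε =>
    hgc.add (continuousOn_const.mul hhc)
  set z : ℝ → ℝ → ℝ := fun ε t => H (A (fun u => g u + ε * h u) t) with hz
  have hA' := fun ε : ℝ => hA _ (hgε ε) (by simp [hg0, hh0])
  have hzd : ∀ ε, ∀ t ∈ Icc (0:ℝ) 1,
      HasDerivWithinAt (z ε) (G (z ε t + (g t + ε * h t))) (Icc 0 1) t := by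
    intro ε t ht
    obtain ⟨hAc, hAe⟩ := hA' ε
    have hGc : Continuous G := continuous_iff_continuousAt.2 fun y => (hGd y).continuousAt
    have hk : ContinuousOn (fun u => fsb b σ φ (A (fun u => g u + ε * h u) u) (g u + ε * h u))
        (Icc 0 1) := by
      simp only [hfsb]
      exact (hσc.comp_continuousOn hAc).mul
        (hGc.comp_continuousOn ((hHc.comp_continuousOn hAc).add (hgε ε)))
    have hAd := ((hk.hasDerivWithinAt_primitive ht).const_add ξ).congr hAe (hAe t ht)
    refine ((hHd _).comp_hasDerivWithinAt t hAd).congr_deriv ?_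
    rw [hfsb]
    simp [hz, hGdef, hne]
  have hz0 : ∀ ε, z ε 0 = H ξ := fun ε => by
    simp [hz, (hA' ε).2 0 (by simp)]
  have hzero : (fun u => g u + 0 * h u) = g := by simp
  have hmain := hasDerivAt_additive_solution hGd hG'M hG'L hgc hhc hz0 hzd ht
  have hx : ∀ u, φ (A g u) (g u) = p (z 0 u + g u) := fun u => by
    simp only [hz, hzero, hφp]
  have hlin : HasDerivAt (fun ε : ℝ => g t + ε * h t) (h t) 0 := by
    simpa using ((hasDerivAt_id (0:ℝ)).mul_const (h t)).const_add (g t)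
  have hcomp := (hpd (z 0 t + (g t + 0 * h t))).comp (0:ℝ) (hmain.add hlin)
  have hfun : (fun ε : ℝ => φ (A (fun u => g u + ε * h u) t) (g t + ε * h t))
      = p ∘ ((fun ε => z ε t) + fun ε => g t + ε * h t) := by
    funext ε
    simp [hφp, hz]
  rw [hfun]
  refine hcomp.congr_deriv ?_
  rw [mul_add, add_comm, hx, zero_mul, add_zero]
  congr 1
  rw [← mul_assoc, ← intervalIntegral.integral_const_mul]
  refine intervalIntegral.integral_congr fun s _ => ?_
  have h1 := hne ξ
  have h2 := hne (p (z 0 s + g s))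
  simp only [Jpath, hx, hG'def, Real.exp_neg]
  field_simp
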